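/- arXiv:2102.00732 — 2 statements merged into one kernel-verified Lean document; each statement's English description precedes it below -/
import Mathlib

section
/- Let 0 < α ≤ 2, p1, p2 > 0, P = 1/p1 + 1/p2 with α/(1+α) < P < α and P ≠ 1. Assume additionally P_{1/α,(1+α)/α} := 1/(α p1) + (1+α)/(α p2) < 1. Let g0 : ℝ²∖{0} → ℝ satisfy |g0(u)| ≤ C ρ0(u)^{P−1} and |∂_1 g0(u)| ≤ C ρ0(u)^{P−1/p1−1} = C ρ0(u)^{1/p2−1} for all u ≠ 0, where ρ0(u) = |u1|^{p1}+|u2|^{p2}. Then for every t > 0, h1(t;u) := g0(t−u1, −u2) − g0(−u1,−u2) satisfies ∫_{ℝ²} |h1(t;u)|^α du < ∞. -/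
open MeasureTheory

/-- `ρ₀(u) = |u₁|^{p₁} + |u₂|^{p₂}`. -/
noncomputable def rho0 (p1 p2 : ℝ) (u : ℝ × ℝ) : ℝ := |u.1| ^ p1 + |u.2| ^ p2

/-- Partial derivative `∂₁ g`. -/
noncomputable def pd1 (g : ℝ × ℝ → ℝ) (u : ℝ × ℝ) : ℝ := deriv (fun a => g (a, u.2)) u.1

lemma rho0_nonneg (p1 p2 : ℝ) (u : ℝ × ℝ) : 0 ≤ rho0 p1 p2 u := by
  unfold rho0; positivity

/-- A negative power of `r` is controlled by a product of negative powers of `a` and `b`, with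
equal exponents, as soon as `r` dominates both `a ^ p1` and `b ^ p2`. -/
lemma rpow_neg_le_mul_rpow_neg {p1 p2 a b c r γ : ℝ} (hp1 : 0 < p1) (hp2 : 0 < p2)
    (ha : 0 < a) (hb : 0 < b) (hc : 0 < c) (har : c * a ^ p1 ≤ r) (hbr : c * b ^ p2 ≤ r)
    (hγ : 0 ≤ γ) :
    r ^ (-γ) ≤ c ^ (-γ) * (a * b) ^ (-(γ / (1 / p1 + 1 / p2))) := by
  have hP : 0 < 1 / p1 + 1 / p2 := by positivity
  have hr : 0 < r := lt_of_lt_of_le (by positivity) har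
  have root_le : ∀ {x p : ℝ}, 0 < p → 0 < x → c * x ^ p ≤ r → x ≤ (r / c) ^ (1 / p) := by
    intro x p hp hx h
    calc x = (x ^ p) ^ (1 / p) := by
          rw [← Real.rpow_mul hx.le, mul_one_div_cancel hp.ne', Real.rpow_one]
      _ ≤ (r / c) ^ (1 / p) := by
          gcongr
          rw [le_div_iff₀ hc]
          linarith
  have hab : a * b ≤ (r / c) ^ (1 / p1 + 1 / p2) := by
    rw [Real.rpow_add (by positivity)]
    exact mul_le_mul (root_le hp1 ha har) (root_le hp2 hb hbr) hb.le (by positivity)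
  have key : (r / c) ^ (-γ) ≤ (a * b) ^ (-(γ / (1 / p1 + 1 / p2))) := by
    calc (r / c) ^ (-γ)
        = ((r / c) ^ (1 / p1 + 1 / p2)) ^ (-(γ / (1 / p1 + 1 / p2))) := by
          rw [← Real.rpow_mul (by positivity)]
          congr 1
          field_simp
      _ ≤ _ := Real.rpow_le_rpow_of_nonpos (by positivity) hab (neg_nonpos.mpr (by positivity))
  calc r ^ (-γ) = c ^ (-γ) * (r / c) ^ (-γ) := by
        rw [← Real.mul_rpow hc.le (by positivity), mul_div_cancel₀ r hc.ne']
    _ ≤ _ := by gcongr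

lemma integrableOn_abs_rpow {s : ℝ} (hs : -1 < s) (R : ℝ) (hR : 0 ≤ R) :
    IntegrableOn (fun x : ℝ => |x| ^ s) (Set.Icc (-R) R) := by
  have hpos : IntervalIntegrable (fun x : ℝ => |x| ^ s) volume 0 R :=
    (intervalIntegral.intervalIntegrable_rpow' hs).congr fun x hx => by
      rw [Set.uIoc_of_le hR] at hx
      simp only [abs_of_pos hx.1]
  have hneg : IntervalIntegrable (fun x : ℝ => |x| ^ s) volume (-R) 0 := by
    have h := (IntervalIntegrable.iff_comp_neg (by simp)).mp hpos
    simp only [abs_neg, neg_zero] at h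
    exact h.symm
  exact (intervalIntegrable_iff_integrableOn_Icc_of_le (by linarith)).mp (hneg.trans hpos)

/-- Local integrability of `|g| ^ α` when `|g| ≤ C ρ₀ ^ (P - 1)` with `α / (1 + α) < P`. -/
lemma integrableOn_rpow_abs_of_le_rho0 {α p1 p2 C R : ℝ} (hα0 : 0 < α) (hp1 : 0 < p1)
    (hp2 : 0 < p2) (hPlow : α / (1 + α) < 1 / p1 + 1 / p2) (hC : 0 < C) (hR : 0 ≤ R)
    {g : ℝ × ℝ → ℝ} (hmeas : Measurable g)
    (hg : ∀ u : ℝ × ℝ, u ≠ 0 → |g u| ≤ C * rho0 p1 p2 u ^ (1 / p1 + 1 / p2 - 1)) :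
    IntegrableOn (fun u => |g u| ^ α) (Set.Icc (-R) R ×ˢ Set.Icc (-R) R) := by
  have hP : 0 < 1 / p1 + 1 / p2 := by positivity
  obtain ⟨s, M, hs, hbound⟩ : ∃ s M : ℝ, -1 < s ∧ ∀ x y : ℝ, x ≠ 0 → y ≠ 0 →
      |x| ≤ R → |y| ≤ R → |g (x, y)| ^ α ≤ M * (|x| ^ s * |y| ^ s) := by
    have hgα : ∀ x y : ℝ, x ≠ 0 → |g (x, y)| ^ α ≤
        C ^ α * rho0 p1 p2 (x, y) ^ ((1 / p1 + 1 / p2 - 1) * α) := by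
      intro x y hx
      have hρ := rho0_nonneg p1 p2 (x, y)
      rw [Real.rpow_mul hρ, ← Real.mul_rpow hC.le (by positivity)]
      exact Real.rpow_le_rpow (abs_nonneg _) (hg _ fun h => hx (Prod.ext_iff.mp h).1) hα0.le
    rcases le_total 1 (1 / p1 + 1 / p2) with h1 | h1
    · refine ⟨0, C ^ α * (R ^ p1 + R ^ p2) ^ ((1 / p1 + 1 / p2 - 1) * α), by norm_num, ?_⟩
      intro x y hx hy hxR hyR
      refine (hgα x y hx).trans ?_
      simp only [Real.rpow_zero, mul_one]
      refine mul_le_mul_of_nonneg_left ?_ (by positivity)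
      refine Real.rpow_le_rpow (rho0_nonneg _ _ _) ?_ (mul_nonneg (by linarith) hα0.le)
      unfold rho0
      gcongr
    · refine ⟨-((1 - (1 / p1 + 1 / p2)) * α / (1 / p1 + 1 / p2)), C ^ α, ?_, ?_⟩
      · rw [neg_lt_neg_iff, div_lt_one hP]
        rw [div_lt_iff₀ (by linarith)] at hPlow
        linarith
      intro x y hx hy _ _
      refine (hgα x y hx).trans (mul_le_mul_of_nonneg_left ?_ (by positivity))
      have h := rpow_neg_le_mul_rpow_neg (r := rho0 p1 p2 (x, y)) hp1 hp2 (abs_pos.mpr hx)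
        (abs_pos.mpr hy) one_pos
        (by rw [one_mul]; exact le_add_of_nonneg_right (by positivity))
        (by rw [one_mul]; exact le_add_of_nonneg_left (by positivity))
        (mul_nonneg (sub_nonneg.mpr h1) hα0.le)
      rw [Real.one_rpow, one_mul, Real.mul_rpow (abs_nonneg _) (abs_nonneg _)] at h
      rwa [← neg_mul, neg_sub] at h
  have hdom : IntegrableOn (fun u : ℝ × ℝ => M * (|u.1| ^ s * |u.2| ^ s))
      (Set.Icc (-R) R ×ˢ Set.Icc (-R) R) := by
    have h := (integrableOn_abs_rpow hs R hR).integrable.mul_prod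
      (integrableOn_abs_rpow hs R hR).integrable
    rw [Measure.prod_restrict] at h
    exact h.const_mul M
  refine hdom.mono' (Measurable.aestronglyMeasurable (by fun_prop)) ?_
  have hx0 : ∀ᵐ u : ℝ × ℝ, u.1 ≠ 0 :=
    Measure.quasiMeasurePreserving_fst.ae (Measure.ae_ne volume 0)
  have hy0 : ∀ᵐ u : ℝ × ℝ, u.2 ≠ 0 :=
    Measure.quasiMeasurePreserving_snd.ae (Measure.ae_ne volume 0)
  filter_upwards [ae_restrict_of_ae hx0, ae_restrict_of_ae hy0,
    ae_restrict_mem (measurableSet_Icc.prod measurableSet_Icc)] with u hx hy hu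
  rw [Real.norm_of_nonneg (by positivity)]
  exact hbound u.1 u.2 hx hy (abs_le.mpr hu.1) (abs_le.mpr hu.2)

/-- Away from the origin, `ρ₀` along a horizontal segment of length `t` dominates inhomogeneous
powers of the coordinates of its starting point. -/
lemma exists_le_rho0_sub {p1 p2 t : ℝ} (hp1 : 0 < p1) (hp2 : 0 < p2) (ht : 0 < t) :
    ∃ c : ℝ, 0 < c ∧ ∀ x y s : ℝ, (2 * t ≤ |x| ∨ 1 ≤ |y|) → s ∈ Set.Icc 0 t →
      c * (1 + |x|) ^ p1 ≤ rho0 p1 p2 (s - x, -y) ∧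
      c * (1 + |y|) ^ p2 ≤ rho0 p1 p2 (s - x, -y) := by
  have scaled : ∀ {k z a p : ℝ}, 0 < k → 0 < p → 0 ≤ z → k * (1 + z) ≤ a →
      k ^ p * (1 + z) ^ p ≤ a ^ p := by
    intro k z a p hk hp hz h
    rw [← Real.mul_rpow hk.le (by linarith)]
    exact Real.rpow_le_rpow (by positivity) h hp.le
  set k := min (1 / 4) (t / 2) with hk
  have hk0 : 0 < k := by positivity
  have hk1 : k ≤ 1 / 4 := min_le_left _ _
  have hk2 : k ≤ t / 2 := min_le_right _ _
  set m := 1 / (1 + 2 * t) with hm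
  have hm0 : 0 < m := by positivity
  set c := min (min (k ^ p1) (m ^ p1)) (min ((1 / 2) ^ p2) (t ^ p1 * (1 / 2) ^ p2)) with hc
  have hc0 : 0 < c := by positivity
  have hck : c ≤ k ^ p1 := (min_le_left _ _).trans (min_le_left _ _)
  have hcm : c ≤ m ^ p1 := (min_le_left _ _).trans (min_le_right _ _)
  have hch : c ≤ (1 / 2) ^ p2 := (min_le_right _ _).trans (min_le_left _ _)
  have hct : c ≤ t ^ p1 * (1 / 2) ^ p2 := (min_le_right _ _).trans (min_le_right _ _)
  refine ⟨c, hc0, fun x y s hxy hs => ?_⟩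
  have hx0 := abs_nonneg x
  have hy0 := abs_nonneg y
  have hρ : rho0 p1 p2 (s - x, -y) = |s - x| ^ p1 + |y| ^ p2 := by simp [rho0]
  have hρ1 : |s - x| ^ p1 ≤ rho0 p1 p2 (s - x, -y) := by
    rw [hρ]; exact le_add_of_nonneg_right (by positivity)
  have hρ2 : |y| ^ p2 ≤ rho0 p1 p2 (s - x, -y) := by
    rw [hρ]; exact le_add_of_nonneg_left (by positivity)
  have hfar_y : 1 ≤ |y| → c * (1 + |y|) ^ p2 ≤ rho0 p1 p2 (s - x, -y) := fun hy =>
    calc c * (1 + |y|) ^ p2 ≤ (1 / 2) ^ p2 * (1 + |y|) ^ p2 := by gcongr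
      _ ≤ |y| ^ p2 := scaled (by norm_num) hp2 hy0 (by linarith)
      _ ≤ _ := hρ2
  by_cases hx : 2 * t ≤ |x|
  · have hsx : |x| - t ≤ |s - x| := by
      have h1 := abs_sub_abs_le_abs_sub x s
      rw [abs_sub_comm x s, abs_of_nonneg hs.1] at h1
      linarith [hs.2]
    constructor
    · calc c * (1 + |x|) ^ p1 ≤ k ^ p1 * (1 + |x|) ^ p1 := by gcongr
        _ ≤ |s - x| ^ p1 := scaled hk0 hp1 hx0 (by nlinarith)
        _ ≤ _ := hρ1
    · rcases le_total 1 |y| with hy | hy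
      · exact hfar_y hy
      · calc c * (1 + |y|) ^ p2 ≤ t ^ p1 * (1 / 2) ^ p2 * (1 + |y|) ^ p2 := by gcongr
          _ = t ^ p1 * ((1 / 2) * (1 + |y|)) ^ p2 := by
              rw [Real.mul_rpow (by norm_num) (by linarith), mul_assoc]
          _ ≤ t ^ p1 * 1 := by
              gcongr
              exact Real.rpow_le_one (by positivity) (by linarith) hp2.le
          _ ≤ |s - x| ^ p1 := by
              rw [mul_one]
              exact Real.rpow_le_rpow ht.le (by linarith) hp1.le
          _ ≤ _ := hρ1
  · have hy : 1 ≤ |y| := hxy.resolve_left hx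
    push Not at hx
    refine ⟨?_, hfar_y hy⟩
    calc c * (1 + |x|) ^ p1 ≤ m ^ p1 * (1 + |x|) ^ p1 := by gcongr
      _ ≤ 1 ^ p1 := scaled hm0 hp1 hx0 (by
          rw [hm, one_div_mul_eq_div, div_le_one (by linarith)]; linarith)
      _ = 1 := Real.one_rpow _
      _ ≤ |y| ^ p2 := Real.one_le_rpow hy hp2.le
      _ ≤ _ := hρ2

/-- Decay of the horizontal increment away from the origin. -/
lemma exists_abs_increment_le {p1 p2 C t : ℝ} (hp1 : 0 < p1) (hp2 : 0 < p2) (hp2' : 1 / p2 ≤ 1)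
    (hC : 0 < C) (ht : 0 < t) {g : ℝ × ℝ → ℝ} (hsm : ContDiffOn ℝ 1 g {(0 : ℝ × ℝ)}ᶜ)
    (hD : ∀ u : ℝ × ℝ, u ≠ 0 → |pd1 g u| ≤ C * rho0 p1 p2 u ^ (1 / p2 - 1)) :
    ∃ K : ℝ, 0 < K ∧ ∀ x y : ℝ, (2 * t ≤ |x| ∨ 1 ≤ |y|) →
      |g (t - x, -y) - g (-x, -y)| ≤
        K * ((1 + |x|) * (1 + |y|)) ^ (-((1 - 1 / p2) / (1 / p1 + 1 / p2))) := by
  obtain ⟨c, hc, hρ⟩ := exists_le_rho0_sub hp1 hp2 ht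
  refine ⟨C * c ^ (-(1 - 1 / p2)) * t, by positivity, fun x y hxy => ?_⟩
  have hne : ∀ s ∈ Set.Icc 0 t, ((s - x, -y) : ℝ × ℝ) ≠ 0 := by
    intro s hs h0
    have h := (hρ x y s hxy hs).1
    rw [h0] at h
    simp only [rho0, Prod.fst_zero, Prod.snd_zero, abs_zero, Real.zero_rpow hp1.ne',
      Real.zero_rpow hp2.ne', add_zero] at h
    have : 0 < c * (1 + |x|) ^ p1 := by positivity
    linarith
  have hslice : ∀ a ∈ Set.Icc (-x) (t - x), ((a, -y) : ℝ × ℝ) ≠ 0 ∧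
      |pd1 g (a, -y)| ≤ C * (c ^ (-(1 - 1 / p2)) *
        ((1 + |x|) * (1 + |y|)) ^ (-((1 - 1 / p2) / (1 / p1 + 1 / p2)))) := by
    intro a ha
    have hs : a + x ∈ Set.Icc 0 t := ⟨by linarith [ha.1], by linarith [ha.2]⟩
    have h0 := hne _ hs
    obtain ⟨h1, h2⟩ := hρ x y _ hxy hs
    rw [add_sub_cancel_right] at h0 h1 h2
    refine ⟨h0, (hD _ h0).trans (mul_le_mul_of_nonneg_left ?_ hC.le)⟩
    rw [← neg_sub 1 (1 / p2)]
    exact rpow_neg_le_mul_rpow_neg hp1 hp2 (by positivity) (by positivity) hc h1 h2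
      (sub_nonneg.mpr hp2')
  have hmvt := (convex_Icc (-x) (t - x)).norm_image_sub_le_of_norm_deriv_le
    (f := fun a => g (a, -y)) (x := -x) (y := t - x)
    (fun a ha => by
      have hga : DifferentiableAt ℝ g (a, -y) :=
        (hsm.differentiableOn one_ne_zero).differentiableAt
          (isOpen_compl_singleton.mem_nhds (hslice a ha).1)
      exact hga.comp a (by fun_prop : DifferentiableAt ℝ (fun a : ℝ => (a, -y)) a))
    (fun a ha => (hslice a ha).2) ⟨le_rfl, by linarith⟩ ⟨by linarith, le_rfl⟩
  rw [show t - x - -x = t by ring, Real.norm_of_nonneg ht.le, Real.norm_eq_abs] at hmvt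
  refine hmvt.trans_eq ?_
  ring

lemma abs_sub_rpow_le {α : ℝ} (hα : 0 ≤ α) (a b : ℝ) :
    |a - b| ^ α ≤ 2 ^ α * (|a| ^ α + |b| ^ α) := by
  calc |a - b| ^ α ≤ (2 * max |a| |b|) ^ α := by
        refine Real.rpow_le_rpow (abs_nonneg _) ((abs_sub a b).trans ?_) hα
        linarith [le_max_left |a| |b|, le_max_right |a| |b|]
    _ = 2 ^ α * max |a| |b| ^ α := Real.mul_rpow (by norm_num) (by positivity)
    _ ≤ _ := by
        gcongr
        rcases max_choice |a| |b| with h | h <;> rw [h]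
        · exact le_add_of_nonneg_right (by positivity)
        · exact le_add_of_nonneg_left (by positivity)

theorem stmt_12 (α p1 p2 C : ℝ) (hα0 : 0 < α) (hα2 : α ≤ 2)
    (hp1 : 0 < p1) (hp2 : 0 < p2)
    (hPlow : α / (1 + α) < 1 / p1 + 1 / p2) (hPhigh : 1 / p1 + 1 / p2 < α)
    (hPne : 1 / p1 + 1 / p2 ≠ 1)
    (hPc : 1 / (α * p1) + (1 + α) / (α * p2) < 1) (hC : 0 < C)
    (g0 : ℝ × ℝ → ℝ) (hmeas : Measurable g0)
    (hsm : ContDiffOn ℝ 1 g0 {(0 : ℝ × ℝ)}ᶜ)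
    (hg : ∀ u : ℝ × ℝ, u ≠ 0 → |g0 u| ≤ C * rho0 p1 p2 u ^ (1 / p1 + 1 / p2 - 1))
    (hD : ∀ u : ℝ × ℝ, u ≠ 0 → |pd1 g0 u| ≤ C * rho0 p1 p2 u ^ (1 / p2 - 1)) :
    ∀ t : ℝ, 0 < t →
      Integrable (fun u : ℝ × ℝ => |g0 (t - u.1, -u.2) - g0 (-u.1, -u.2)| ^ α) volume := by
  intro t ht
  have hP : 0 < 1 / p1 + 1 / p2 := by positivity
  have hexp : 1 / p1 + 1 / p2 < (1 - 1 / p2) * α := by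
    have h : 1 / (α * p1) + (1 + α) / (α * p2) = (1 / p1 + 1 / p2 + α * (1 / p2)) / α := by
      field_simp
      ring
    rw [h, div_lt_one hα0] at hPc
    linarith
  have hp2' : 1 / p2 ≤ 1 := by
    by_contra! h
    nlinarith
  obtain ⟨K, hK, hfar⟩ := exists_abs_increment_le hp1 hp2 hp2' hC ht hsm hD
  set δ := (1 - 1 / p2) / (1 / p1 + 1 / p2) with hδ
  have hδα : 1 < δ * α := by
    rw [hδ, div_mul_eq_mul_div, lt_div_iff₀ hP]
    linarith
  set R := 3 * t + 1 with hR
  set F : ℝ × ℝ → ℝ :=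
    (Set.Icc (-R) R ×ˢ Set.Icc (-R) R).indicator fun u => |g0 u| ^ α with hF
  have hFint : Integrable F :=
    (integrableOn_rpow_abs_of_le_rho0 hα0 hp1 hp2 hPlow hC (by positivity) hmeas
      hg).integrable_indicator (measurableSet_Icc.prod measurableSet_Icc)
  have hF0 : ∀ u, 0 ≤ F u := Set.indicator_nonneg fun u _ => by positivity
  have hF1 : Integrable fun u : ℝ × ℝ => F (t - u.1, -u.2) := by
    simpa [Prod.sub_def] using hFint.comp_sub_left (t, 0)
  have hF2 : Integrable fun u : ℝ × ℝ => F (-u.1, -u.2) := hFint.comp_neg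
  have hdecay : Integrable fun u : ℝ × ℝ =>
      (1 + ‖u.1‖) ^ (-(δ * α)) * (1 + ‖u.2‖) ^ (-(δ * α)) := by
    have h : Integrable (fun x : ℝ => (1 + ‖x‖) ^ (-(δ * α))) :=
      integrable_one_add_norm (by simpa using hδα)
    exact h.mul_prod h
  refine (((hF1.add hF2).const_mul (2 ^ α)).add (hdecay.const_mul (K ^ α))).mono'
    (Measurable.aestronglyMeasurable (by fun_prop)) (Filter.Eventually.of_forall ?_)
  rintro ⟨x, y⟩
  simp only [Pi.add_apply, Real.norm_eq_abs]
  rw [abs_of_nonneg (Real.rpow_nonneg (abs_nonneg _) _)]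
  by_cases hxy : 2 * t ≤ |x| ∨ 1 ≤ |y|
  · refine le_add_of_nonneg_of_le
      (mul_nonneg (by positivity) (add_nonneg (hF0 _) (hF0 _))) ?_
    refine (Real.rpow_le_rpow (abs_nonneg _) (hfar x y hxy) hα0.le).trans_eq ?_
    rw [Real.mul_rpow hK.le (by positivity), ← Real.rpow_mul (by positivity),
      Real.mul_rpow (by positivity) (by positivity), neg_mul]
  · push Not at hxy
    refine le_add_of_le_of_nonneg ?_ (by positivity)
    have hx := abs_lt.mp hxy.1
    have hy := abs_lt.mp hxy.2
    have e1 : F (t - x, -y) = |g0 (t - x, -y)| ^ α := by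
      refine Set.indicator_of_mem ?_ _
      simp only [Set.mem_prod, Set.mem_Icc]
      refine ⟨⟨?_, ?_⟩, ?_, ?_⟩ <;> linarith
    have e2 : F (-x, -y) = |g0 (-x, -y)| ^ α := by
      refine Set.indicator_of_mem ?_ _
      simp only [Set.mem_prod, Set.mem_Icc]
      refine ⟨⟨?_, ?_⟩, ?_, ?_⟩ <;> linarith
    rw [e1, e2]
    exact abs_sub_rpow_le hα0.le _ _
end

section
/- Let q1, q2 > 0 with Q = 1/q1 + 1/q2 and γ0 = q1/q2, let 0 < α ≤ 2 and −Q/α < χ < 1/max{q1,q2} − Q/α with χ < 0. Suppose g0 : ℝ²∖{0} → ℝ satisfies |g0(t)| ≤ C ρ(t)^χ and |∂_i g0(t)| ≤ C ρ(t)^{χ−1/q_i} (i = 1,2) for all t ≠ 0, where ρ(t) = |t1|^{q1}+|t2|^{q2}. Then for every t ∈ ℝ², the increment h0(t;u) := g0(t−u) − g0(−u) satisfies ∫_{ℝ²} |h0(t;u)|^α du < ∞. -/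
open MeasureTheory

/-- `ρ(t) = |t₁|^{q₁} + |t₂|^{q₂}`. -/
noncomputable def rho (q1 q2 : ℝ) (t : ℝ × ℝ) : ℝ := |t.1| ^ q1 + |t.2| ^ q2

lemma rho_nonneg (q1 q2 : ℝ) (t : ℝ × ℝ) : 0 ≤ rho q1 q2 t := by
  unfold rho; positivity

lemma abs_fst_le_rho_rpow {q1 : ℝ} (q2 : ℝ) (hq1 : 0 < q1) (u : ℝ × ℝ) :
    |u.1| ≤ rho q1 q2 u ^ (1 / q1) := by
  rw [one_div, Real.le_rpow_inv_iff_of_pos (abs_nonneg _) (rho_nonneg _ _ _) hq1, rho]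
  exact le_add_of_nonneg_right (by positivity)

lemma abs_snd_le_rho_rpow (q1 : ℝ) {q2 : ℝ} (hq2 : 0 < q2) (u : ℝ × ℝ) :
    |u.2| ≤ rho q1 q2 u ^ (1 / q2) := by
  rw [one_div, Real.le_rpow_inv_iff_of_pos (abs_nonneg _) (rho_nonneg _ _ _) hq2, rho]
  exact le_add_of_nonneg_left (by positivity)

lemma abs_rpow_integrableOn_Icc {r : ℝ} (hr : -1 < r) (R : ℝ) :
    IntegrableOn (fun x : ℝ => |x| ^ r) (Set.Icc (-R) R) := by
  rcases lt_or_ge R 0 with hR | hR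
  · simp [Set.Icc_eq_empty (show ¬ -R ≤ R by linarith)]
  have hpos : IntegrableOn (fun x : ℝ => |x| ^ r) (Set.Icc 0 R) := by
    have h := (intervalIntegral.intervalIntegrable_rpow' (a := 0) (b := R) hr)
    rw [intervalIntegrable_iff_integrableOn_Icc_of_le hR] at h
    exact h.congr_fun (fun x hx => by simp [abs_of_nonneg hx.1]) measurableSet_Icc
  have hneg : IntegrableOn (fun x : ℝ => |x| ^ r) (Set.Icc (-R) 0) := by
    have h := ((Measure.measurePreserving_neg (volume : Measure ℝ)).integrableOn_comp_preimage
      (Homeomorph.neg ℝ).measurableEmbedding).2 hpos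
    convert h using 1
    · ext x; simp
    · ext x; simp
  rw [← Set.Icc_union_Icc_eq_Icc (neg_nonpos.2 hR) hR]
  exact hneg.union hpos

/-- Near the origin, `ρ^χ` is dominated by a product of one-variable powers. -/
lemma rho_rpow_le_prod {q1 q2 χ : ℝ} (hq1 : 0 < q1) (hq2 : 0 < q2) (hχ : χ ≤ 0)
    {u : ℝ × ℝ} (h1 : u.1 ≠ 0) (h2 : u.2 ≠ 0) :
    rho q1 q2 u ^ χ ≤
      |u.1| ^ (χ / (1 / q1 + 1 / q2)) * |u.2| ^ (χ / (1 / q1 + 1 / q2)) := by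
  have hQ : 0 < 1 / q1 + 1 / q2 := by positivity
  have hu1 : 0 < |u.1| := abs_pos.2 h1
  have hu2 : 0 < |u.2| := abs_pos.2 h2
  have hρ : 0 < rho q1 q2 u := by unfold rho; positivity
  have hprod : |u.1| * |u.2| ≤ rho q1 q2 u ^ (1 / q1 + 1 / q2) := by
    rw [Real.rpow_add hρ]
    exact mul_le_mul (abs_fst_le_rho_rpow q2 hq1 u) (abs_snd_le_rho_rpow q1 hq2 u)
      hu2.le (by positivity)
  have h := Real.rpow_le_rpow_of_nonpos (mul_pos hu1 hu2) hprod
    (div_nonpos_of_nonpos_of_nonneg hχ hQ.le)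
  rwa [← Real.rpow_mul hρ.le, mul_div_cancel₀ _ hQ.ne', Real.mul_rpow hu1.le hu2.le] at h

lemma integrableOn_closedBall_abs_rpow {α q1 q2 χ C : ℝ} (hα0 : 0 < α)
    (hq1 : 0 < q1) (hq2 : 0 < q2) (hχneg : χ < 0)
    (hχlow : -(1 / q1 + 1 / q2) / α < χ) (hC : 0 < C)
    {g0 : ℝ × ℝ → ℝ} (hmeas : Measurable g0)
    (hg : ∀ t : ℝ × ℝ, t ≠ 0 → |g0 t| ≤ C * rho q1 q2 t ^ χ) (R : ℝ) :
    IntegrableOn (fun u => |g0 u| ^ α) (Metric.closedBall (0 : ℝ × ℝ) R) := by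
  have hQ : 0 < 1 / q1 + 1 / q2 := by positivity
  set r := α * χ / (1 / q1 + 1 / q2) with hr
  have hr1 : -1 < r := by
    rw [hr, lt_div_iff₀ hQ]
    rw [div_lt_iff₀ hα0] at hχlow
    linarith
  have hdom : IntegrableOn (fun u : ℝ × ℝ => C ^ α * (|u.1| ^ r * |u.2| ^ r))
      (Metric.closedBall (0 : ℝ × ℝ) R) := by
    have h1 := abs_rpow_integrableOn_Icc hr1 R
    have h := (Integrable.mul_prod h1 h1).const_mul (C ^ α)
    rw [Measure.prod_restrict] at h
    have hball : Metric.closedBall (0 : ℝ × ℝ) R = Set.Icc (-R) R ×ˢ Set.Icc (-R) R := by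
      rw [show (0 : ℝ × ℝ) = (0, 0) from rfl, ← closedBall_prod_same, Real.closedBall_eq_Icc]
      simp
    rw [hball]
    exact h
  refine Integrable.mono' hdom (Measurable.aestronglyMeasurable (by fun_prop)) (ae_restrict_of_ae ?_)
  have hfst : ∀ᵐ u : ℝ × ℝ, u.1 ≠ 0 :=
    Measure.quasiMeasurePreserving_fst.ae (Measure.ae_ne volume (0 : ℝ))
  have hsnd : ∀ᵐ u : ℝ × ℝ, u.2 ≠ 0 :=
    Measure.quasiMeasurePreserving_snd.ae (Measure.ae_ne volume (0 : ℝ))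
  filter_upwards [hfst, hsnd] with u h1 h2
  have hu : u ≠ 0 := fun h => h1 (by simp [h])
  have hρ := rho_nonneg q1 q2 u
  calc ‖|g0 u| ^ α‖ = |g0 u| ^ α := Real.norm_of_nonneg (by positivity)
    _ ≤ (C * rho q1 q2 u ^ χ) ^ α :=
        Real.rpow_le_rpow (abs_nonneg _) (hg u hu) hα0.le
    _ = C ^ α * rho q1 q2 u ^ (α * χ) := by
        rw [Real.mul_rpow hC.le (by positivity), ← Real.rpow_mul hρ, mul_comm χ]
    _ ≤ C ^ α * (|u.1| ^ r * |u.2| ^ r) := by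
        gcongr
        exact rho_rpow_le_prod hq1 hq2 (mul_nonpos_of_nonneg_of_nonpos hα0.le hχneg.le) h1 h2

lemma one_add_abs_fst_le {q1 : ℝ} (q2 : ℝ) (hq1 : 0 < q1) (u : ℝ × ℝ) :
    1 + |u.1| ≤ 2 * (1 + rho q1 q2 u) ^ (1 / q1) := by
  have hρ := rho_nonneg q1 q2 u
  have h1 : (1 : ℝ) ≤ (1 + rho q1 q2 u) ^ (1 / q1) :=
    Real.one_le_rpow (by linarith) (by positivity)
  have h2 : |u.1| ≤ (1 + rho q1 q2 u) ^ (1 / q1) :=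
    (abs_fst_le_rho_rpow q2 hq1 u).trans
      (Real.rpow_le_rpow hρ (by linarith) (by positivity))
  linarith

lemma one_add_abs_snd_le (q1 : ℝ) {q2 : ℝ} (hq2 : 0 < q2) (u : ℝ × ℝ) :
    1 + |u.2| ≤ 2 * (1 + rho q1 q2 u) ^ (1 / q2) := by
  have hρ := rho_nonneg q1 q2 u
  have h1 : (1 : ℝ) ≤ (1 + rho q1 q2 u) ^ (1 / q2) :=
    Real.one_le_rpow (by linarith) (by positivity)
  have h2 : |u.2| ≤ (1 + rho q1 q2 u) ^ (1 / q2) :=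
    (abs_snd_le_rho_rpow q1 hq2 u).trans
      (Real.rpow_le_rpow hρ (by linarith) (by positivity))
  linarith

lemma measurable_rho (q1 q2 : ℝ) : Measurable (rho q1 q2) := by
  unfold rho; fun_prop

lemma integrable_one_add_rho_rpow_neg {q1 q2 s : ℝ} (hq1 : 0 < q1) (hq2 : 0 < q2)
    (hs : 1 / q1 + 1 / q2 < s) :
    Integrable (fun u : ℝ × ℝ => (1 + rho q1 q2 u) ^ (-s)) := by
  have hQ : 0 < 1 / q1 + 1 / q2 := by positivity
  set Q := 1 / q1 + 1 / q2 with hQdef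
  have hr : 1 < s / Q := by rwa [lt_div_iff₀ hQ, one_mul]
  have h1 : Integrable (fun x : ℝ => (1 + ‖x‖) ^ (-(s / Q))) :=
    integrable_one_add_norm (by simpa using hr)
  have hdom := (h1.mul_prod h1).const_mul ((4 : ℝ) ^ (s / Q))
  have hm := measurable_rho q1 q2
  refine Integrable.mono' hdom (Measurable.aestronglyMeasurable (by fun_prop)) (Filter.Eventually.of_forall fun u => ?_)
  have hρ : 0 < 1 + rho q1 q2 u := by linarith [rho_nonneg q1 q2 u]
  have hprod : (1 + |u.1|) * (1 + |u.2|) ≤ 4 * (1 + rho q1 q2 u) ^ Q := by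
    rw [hQdef, Real.rpow_add hρ]
    calc (1 + |u.1|) * (1 + |u.2|)
        ≤ (2 * (1 + rho q1 q2 u) ^ (1 / q1)) * (2 * (1 + rho q1 q2 u) ^ (1 / q2)) :=
          mul_le_mul (one_add_abs_fst_le q2 hq1 u) (one_add_abs_snd_le q1 hq2 u)
            (by positivity) (by positivity)
      _ = _ := by ring
  have h := Real.rpow_le_rpow_of_nonpos (by positivity) hprod
    (show -(s / Q) ≤ 0 by linarith)
  rw [Real.mul_rpow (by positivity) (by positivity), Real.mul_rpow (by positivity) (by positivity),
    ← Real.rpow_mul hρ.le, mul_neg, mul_div_cancel₀ _ hQ.ne', Real.rpow_neg (by norm_num),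
    inv_mul_le_iff₀ (by positivity)] at h
  rw [Real.norm_of_nonneg (by positivity)]
  exact h

/-- The power of `|x|` is controlled, up to a constant, by that of any point `w` within `T` of `-x`. -/
lemma abs_rpow_le_of_near {q x w T R : ℝ} (hq : 0 < q) (hR : 2 * T ≤ R) (hT : 0 ≤ T)
    (hw : |w + x| ≤ T) : |x| ^ q ≤ R ^ q + 2 ^ q * |w| ^ q := by
  have hR0 : 0 ≤ R := by linarith
  rcases le_or_gt |x| R with h | h
  · have := Real.rpow_le_rpow (abs_nonneg x) h hq.le
    have : 0 ≤ 2 ^ q * |w| ^ q := by positivity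
    linarith
  · have hxw : |x| ≤ 2 * |w| := by
      have h3 : |x| ≤ |w + x| + |w| := by
        simpa [abs_neg] using abs_add_le (w + x) (-w)
      linarith
    have := Real.rpow_le_rpow (abs_nonneg x) hxw hq.le
    rw [Real.mul_rpow (by norm_num) (abs_nonneg _)] at this
    have : 0 ≤ R ^ q := by positivity
    linarith

lemma one_le_rho_of_far {q1 q2 T : ℝ} (hq1 : 0 < q1) (hq2 : 0 < q2) (hT : 0 ≤ T)
    {u w : ℝ × ℝ} (hu : 2 * T + 2 < ‖u‖) (h1 : |w.1 + u.1| ≤ T) (h2 : |w.2 + u.2| ≤ T) :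
    1 ≤ rho q1 q2 w := by
  have far : ∀ {x y : ℝ}, 2 * T + 2 < |x| → |y + x| ≤ T → 1 ≤ |y| := fun {x y} hx hy => by
    have h3 : |x| ≤ |y + x| + |y| := by
      simpa [abs_neg] using abs_add_le (y + x) (-y)
    linarith
  rw [Prod.norm_def, lt_max_iff] at hu
  have p1 : 0 ≤ |w.1| ^ q1 := by positivity
  have p2 : 0 ≤ |w.2| ^ q2 := by positivity
  unfold rho
  rcases hu with hu | hu
  · linarith [Real.one_le_rpow (far hu h1) hq1.le]
  · linarith [Real.one_le_rpow (far hu h2) hq2.le]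

/-- Far from the origin, `ρ` at points near `-u` is comparable with `1 + ρ(u)`. -/
lemma exists_one_add_rho_le_mul_rho {q1 q2 T : ℝ} (hq1 : 0 < q1) (hq2 : 0 < q2) (hT : 0 ≤ T) :
    ∃ K : ℝ, 0 < K ∧ ∀ u w : ℝ × ℝ, 2 * T + 2 < ‖u‖ → |w.1 + u.1| ≤ T → |w.2 + u.2| ≤ T →
      1 + rho q1 q2 u ≤ K * rho q1 q2 w := by
  refine ⟨1 + (2 * T + 2) ^ q1 + (2 * T + 2) ^ q2 + 2 ^ q1 + 2 ^ q2, by positivity,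
    fun u w hu h1 h2 => ?_⟩
  have hw := one_le_rho_of_far hq1 hq2 hT hu h1 h2
  have e1 := abs_rpow_le_of_near hq1 (show 2 * T ≤ 2 * T + 2 by linarith) hT h1
  have e2 := abs_rpow_le_of_near hq2 (show 2 * T ≤ 2 * T + 2 by linarith) hT h2
  have p1 : 0 ≤ |w.1| ^ q1 := by positivity
  have p2 : 0 ≤ |w.2| ^ q2 := by positivity
  have a1 : (0 : ℝ) < 2 ^ q1 := by positivity
  have a2 : (0 : ℝ) < 2 ^ q2 := by positivity
  have hA : 0 ≤ 1 + (2 * T + 2) ^ q1 + (2 * T + 2) ^ q2 := by positivity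
  have hA' := mul_le_mul_of_nonneg_left hw hA
  have m1 := mul_nonneg a1.le p2
  have m2 := mul_nonneg a2.le p1
  unfold rho at *
  nlinarith

/-- Mean value estimate for a function of one variable along the segment from `-x` to `t - x`. -/
lemma abs_sub_le_of_deriv_le_near {f : ℝ → ℝ} {x t T B : ℝ} (ht : |t| ≤ T)
    (hf : ∀ y, |y + x| ≤ T → DifferentiableAt ℝ f y)
    (hB : ∀ y, |y + x| ≤ T → |deriv f y| ≤ B) :
    |f (t - x) - f (-x)| ≤ B * T := by
  have hT : 0 ≤ T := (abs_nonneg t).trans ht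
  have hmem : ∀ y, y ∈ Metric.closedBall (-x) T ↔ |y + x| ≤ T := fun y => by
    rw [Metric.mem_closedBall, Real.dist_eq, sub_neg_eq_add]
  have h := Convex.norm_image_sub_le_of_norm_deriv_le (f := f) (s := Metric.closedBall (-x) T)
    (x := -x) (y := t - x) (C := B) (fun y hy => hf y ((hmem y).1 hy))
    (fun y hy => hB y ((hmem y).1 hy)) (convex_closedBall _ _)
    ((hmem _).2 (by simpa using hT)) ((hmem _).2 (by simpa using ht))
  have hB0 : 0 ≤ B := (abs_nonneg _).trans (hB (-x) (by simpa using hT))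
  refine h.trans (mul_le_mul_of_nonneg_left ?_ hB0)
  simpa using ht

lemma integrableOn_compl_closedBall_increment {α q1 q2 χ C : ℝ} (hα0 : 0 < α)
    (hq1 : 0 < q1) (hq2 : 0 < q2) (hχneg : χ < 0)
    (hχhigh : χ < 1 / max q1 q2 - (1 / q1 + 1 / q2) / α)
    (hC : 0 < C) {g0 : ℝ × ℝ → ℝ} (hmeas : Measurable g0)
    (hdiff : ∀ t : ℝ × ℝ, t ≠ 0 →
      DifferentiableAt ℝ (fun x => g0 (x, t.2)) t.1 ∧
      DifferentiableAt ℝ (fun y => g0 (t.1, y)) t.2)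
    (hd1 : ∀ t : ℝ × ℝ, t ≠ 0 →
      |deriv (fun x => g0 (x, t.2)) t.1| ≤ C * rho q1 q2 t ^ (χ - 1 / q1))
    (hd2 : ∀ t : ℝ × ℝ, t ≠ 0 →
      |deriv (fun y => g0 (t.1, y)) t.2| ≤ C * rho q1 q2 t ^ (χ - 1 / q2)) (t : ℝ × ℝ) :
    IntegrableOn (fun u : ℝ × ℝ =>
        |g0 (t.1 - u.1, t.2 - u.2) - g0 (-u.1, -u.2)| ^ α)
      (Metric.closedBall (0 : ℝ × ℝ) (2 * ‖t‖ + 2))ᶜ := by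
  have hT := norm_nonneg t
  have ht1 : |t.1| ≤ ‖t‖ := norm_fst_le t
  have ht2 : |t.2| ≤ ‖t‖ := norm_snd_le t
  obtain ⟨K, hK, hKρ⟩ := exists_one_add_rho_le_mul_rho hq1 hq2 hT
  set m := 1 / max q1 q2 - χ with hm
  have hmax : 0 < 1 / max q1 q2 := by positivity
  have hm0 : 0 < m := by linarith
  have hm1 : χ - 1 / q1 ≤ -m := by
    have := one_div_le_one_div_of_le hq1 (le_max_left q1 q2)
    linarith
  have hm2 : χ - 1 / q2 ≤ -m := by
    have := one_div_le_one_div_of_le hq2 (le_max_right q1 q2)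
    linarith
  have hs : 1 / q1 + 1 / q2 < m * α := by
    rw [← div_lt_iff₀ hα0]; linarith
  have hdom := (integrable_one_add_rho_rpow_neg hq1 hq2 hs).const_mul
    ((2 * (C * K ^ m * ‖t‖)) ^ α)
  refine Integrable.mono' hdom.integrableOn (Measurable.aestronglyMeasurable (by fun_prop))
    ((ae_restrict_iff' Metric.isClosed_closedBall.measurableSet.compl).2
      (Filter.Eventually.of_forall fun u hu => ?_))
  replace hu : 2 * ‖t‖ + 2 < ‖u‖ := by simpa using hu
  have hρu : 0 < 1 + rho q1 q2 u := by linarith [rho_nonneg q1 q2 u]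
  set B := C * K ^ m * (1 + rho q1 q2 u) ^ (-m) with hB
  have near : ∀ w : ℝ × ℝ, |w.1 + u.1| ≤ ‖t‖ → |w.2 + u.2| ≤ ‖t‖ →
      w ≠ 0 ∧ ∀ e ≤ -m, C * rho q1 q2 w ^ e ≤ B := by
    intro w h1 h2
    have hw := one_le_rho_of_far hq1 hq2 hT hu h1 h2
    refine ⟨?_, fun e he => ?_⟩
    · rintro rfl
      norm_num [rho, Real.zero_rpow hq1.ne', Real.zero_rpow hq2.ne'] at hw
    · have h := Real.rpow_le_rpow_of_nonpos hρu (hKρ u w hu h1 h2) (neg_nonpos.2 hm0.le)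
      rw [Real.mul_rpow hK.le (by linarith), Real.rpow_neg hK.le,
        inv_mul_le_iff₀ (by positivity)] at h
      rw [hB, mul_assoc]
      gcongr
      exact (Real.rpow_le_rpow_of_exponent_le hw he).trans h
  have hx : |g0 (t.1 - u.1, t.2 - u.2) - g0 (-u.1, t.2 - u.2)| ≤ B * ‖t‖ := by
    have hn : ∀ y, |y + u.1| ≤ ‖t‖ → _ := fun y hy =>
      near (y, t.2 - u.2) hy (by simpa using ht2)
    exact abs_sub_le_of_deriv_le_near (f := fun x => g0 (x, t.2 - u.2)) ht1
      (fun y hy => (hdiff _ (hn y hy).1).1)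
      (fun y hy => (hd1 _ (hn y hy).1).trans ((hn y hy).2 _ hm1))
  have hy : |g0 (-u.1, t.2 - u.2) - g0 (-u.1, -u.2)| ≤ B * ‖t‖ := by
    have hn : ∀ y, |y + u.2| ≤ ‖t‖ → _ := fun y hy =>
      near (-u.1, y) (by simp) hy
    exact abs_sub_le_of_deriv_le_near (f := fun y => g0 (-u.1, y)) ht2
      (fun y hy => (hdiff _ (hn y hy).1).2)
      (fun y hy => (hd2 _ (hn y hy).1).trans ((hn y hy).2 _ hm2))
  have hxy := (abs_sub_le _ _ _).trans (add_le_add hx hy)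
  calc ‖|g0 (t.1 - u.1, t.2 - u.2) - g0 (-u.1, -u.2)| ^ α‖
      = |g0 (t.1 - u.1, t.2 - u.2) - g0 (-u.1, -u.2)| ^ α :=
        Real.norm_of_nonneg (by positivity)
    _ ≤ (B * ‖t‖ + B * ‖t‖) ^ α := Real.rpow_le_rpow (abs_nonneg _) hxy hα0.le
    _ = (2 * (C * K ^ m * ‖t‖) * (1 + rho q1 q2 u) ^ (-m)) ^ α := by rw [hB]; ring_nf
    _ = (2 * (C * K ^ m * ‖t‖)) ^ α * (1 + rho q1 q2 u) ^ (-(m * α)) := by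
        rw [Real.mul_rpow (by positivity) (by positivity), ← Real.rpow_mul hρu.le, neg_mul]

lemma integrableOn_closedBall_comp_sub_left {F : ℝ × ℝ → ℝ}
    (hF : ∀ R, IntegrableOn F (Metric.closedBall (0 : ℝ × ℝ) R)) (t : ℝ × ℝ) (R : ℝ) :
    IntegrableOn (fun u => F (t - u)) (Metric.closedBall (0 : ℝ × ℝ) R) := by
  have h := ((volume : Measure (ℝ × ℝ)).measurePreserving_sub_left t).integrableOn_comp_preimage
      (Homeomorph.subLeft t).measurableEmbedding |>.2 (hF (‖t‖ + R))
  refine IntegrableOn.mono_set h fun u hu => ?_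
  rw [mem_closedBall_zero_iff] at hu
  rw [Set.mem_preimage, mem_closedBall_zero_iff]
  exact (norm_sub_le _ _).trans (by linarith)

theorem stmt_19 (α q1 q2 χ C : ℝ) (hα0 : 0 < α) (hα2 : α ≤ 2)
    (hq1 : 0 < q1) (hq2 : 0 < q2) (hχneg : χ < 0)
    (hχlow : -(1 / q1 + 1 / q2) / α < χ)
    (hχhigh : χ < 1 / max q1 q2 - (1 / q1 + 1 / q2) / α)
    (hC : 0 < C)
    (g0 : ℝ × ℝ → ℝ) (hmeas : Measurable g0)
    (hdiff : ∀ t : ℝ × ℝ, t ≠ 0 →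
      DifferentiableAt ℝ (fun x => g0 (x, t.2)) t.1 ∧
      DifferentiableAt ℝ (fun y => g0 (t.1, y)) t.2)
    (hg : ∀ t : ℝ × ℝ, t ≠ 0 → |g0 t| ≤ C * rho q1 q2 t ^ χ)
    (hd1 : ∀ t : ℝ × ℝ, t ≠ 0 →
      |deriv (fun x => g0 (x, t.2)) t.1| ≤ C * rho q1 q2 t ^ (χ - 1 / q1))
    (hd2 : ∀ t : ℝ × ℝ, t ≠ 0 →
      |deriv (fun y => g0 (t.1, y)) t.2| ≤ C * rho q1 q2 t ^ (χ - 1 / q2)) :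
    ∀ t : ℝ × ℝ,
      Integrable (fun u : ℝ × ℝ =>
        |g0 (t.1 - u.1, t.2 - u.2) - g0 (-u.1, -u.2)| ^ α) volume := by
  intro t
  rw [← integrableOn_univ, ← Set.union_compl_self (Metric.closedBall (0 : ℝ × ℝ) (2 * ‖t‖ + 2))]
  refine IntegrableOn.union ?_ (integrableOn_compl_closedBall_increment hα0 hq1 hq2 hχneg
    hχhigh hC hmeas hdiff hd1 hd2 t)
  have hloc := integrableOn_closedBall_abs_rpow hα0 hq1 hq2 hχneg hχlow hC hmeas hg
  have hshift := integrableOn_closedBall_comp_sub_left hloc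
  have hdom := ((hshift t (2 * ‖t‖ + 2)).add (hshift 0 (2 * ‖t‖ + 2))).const_mul (2 ^ α)
  refine Integrable.mono' hdom (Measurable.aestronglyMeasurable (by fun_prop)) (Filter.Eventually.of_forall fun u => ?_)
  rw [Real.norm_of_nonneg (by positivity)]
  have h := abs_sub_rpow_le hα0.le (g0 (t - u)) (g0 (-u))
  simp only [Pi.add_apply, zero_sub]
  exact h
end
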